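/- Let 𝔽₄ be the field with four elements, with conjugation x̄ = x², trace Tr(x) = x + x² ∈ 𝔽₂, and symplectic form ω(x,y) = Σⱼ Tr(xⱼ ȳⱼ) on 𝔽₄ⁿ. For an integer m ≥ 3 set δ₂ = 1/18 and δ_m = (3/5)·2^m/((2^m − 2)(2^{m+1} − 2)), and for δ ∈ [δ_m, δ_{m−1}] set R(δ) = 1 − 2/(2^m − 2) − (10/3)·m·δ. Then for every m ≥ 3, every δ ∈ [δ_m, δ_{m−1}], every ε > 0 and every N, there exist n ≥ N and an 𝔽₂-subspace F ⊆ 𝔽₄ⁿ such that: (i) ω(x,y) = 0 for all x, y ∈ F (F is a small symplectic code); (ii) n − dim_{𝔽₂} F ≥ (R(δ) − ε)·n; and (iii) every f ∈ F^ω with f ∉ F has Hamming weight ≥ (δ − ε)·n, where F^ω = {x ∈ 𝔽₄ⁿ : ω(x,y) = 0 for all y ∈ F}. -/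

import Mathlib

/-!
A Gilbert–Varshamov argument. Starting from the zero code, adjoin to a self-orthogonal code `F` over
`𝔽_q` a vector `u ∈ F^ω`: a word of `F^ω ∖ F` stays orthogonal to the enlarged code for exactly one
in `q` choices of `u`, so some `u` removes all but a fraction `1 / q` of the low-weight words of
`F^ω ∖ F`. After `r` steps none is left as soon as the Hamming ball has fewer than `q ^ r` elements,
and for `δ ≤ 1 - 1 / q²` the ball of relative radius `δ` in `𝔽_{q²}ⁿ` has at most `exp (n * H(δ))`
elements, where `H` is the `q²`-ary entropy. For `q = 2`, Gibbs' inequality against the distribution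
proportional to `(1, 8⁻ᵐ, 8⁻ᵐ, 8⁻ᵐ)` bounds `H` by an affine function that lies below the broken
line `1 - R`.
-/

open Finset Module Submodule
open Real (qaryEntropy)

section BilinForm

variable {R M : Type*} [CommRing R] [AddCommGroup M] [Module R M]
  {B : LinearMap.BilinForm R M} {F : Submodule R M} {u v : M}

theorem mem_orthogonal_sup_span_singleton :
    v ∈ B.orthogonal (F ⊔ R ∙ u) ↔ v ∈ B.orthogonal F ∧ B u v = 0 := by
  refine ⟨fun h => ⟨B.orthogonal_le le_sup_left h, h u (mem_sup_right (mem_span_singleton_self u))⟩,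
    fun ⟨hF, hu⟩ w hw => ?_⟩
  obtain ⟨a, ha, _, hc, rfl⟩ := mem_sup.1 hw
  obtain ⟨k, rfl⟩ := mem_span_singleton.1 hc
  have hav : B a v = 0 := hF a ha
  simp [hav, hu]

theorem sup_span_singleton_le_orthogonal (hB : B.IsAlt) (hF : F ≤ B.orthogonal F)
    (hu : u ∈ B.orthogonal F) : F ⊔ R ∙ u ≤ B.orthogonal (F ⊔ R ∙ u) :=
  sup_le
    (fun x hx => mem_orthogonal_sup_span_singleton.2 ⟨hF hx, hB.isRefl _ _ (hu x hx)⟩)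
    ((span_singleton_le_iff_mem _ _).2
      (mem_orthogonal_sup_span_singleton.2 ⟨hu, hB.self_eq_zero u⟩))

end BilinForm

section Isotropic

variable {K V : Type*} [Field K] [AddCommGroup V] [Module K V]

open scoped Classical in
/-- The elements of `S` that are orthogonal to `F` without lying in it: when `F` is the symplectic
code of a stabilizer code, these are the errors in `S` that the code does not detect. -/
noncomputable def undetected (B : LinearMap.BilinForm K V) (S : Finset V) (F : Submodule K V) :
    Finset V :=
  {v ∈ S | v ∈ B.orthogonal F ∧ v ∉ F}

variable {B : LinearMap.BilinForm K V} {S : Finset V} {F : Submodule K V} {u v : V}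

theorem mem_undetected : v ∈ undetected B S F ↔ v ∈ S ∧ v ∈ B.orthogonal F ∧ v ∉ F := by
  simp only [undetected, mem_filter]

open scoped Classical in
theorem undetected_sup_span_singleton_subset :
    undetected B S (F ⊔ K ∙ u) ⊆ {v ∈ undetected B S F | B u v = 0} := by
  intro v hv
  obtain ⟨hS, hort, hnot⟩ := mem_undetected.1 hv
  obtain ⟨hF, hu⟩ := mem_orthogonal_sup_span_singleton.1 hort
  exact mem_filter.2 ⟨mem_undetected.2 ⟨hS, hF, fun h => hnot (mem_sup_left h)⟩, hu⟩

theorem exists_mem_orthogonal_apply_ne_zero [FiniteDimensional K V] (hB : B.IsRefl)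
    (hnd : B.Nondegenerate) (hv : v ∉ F) : ∃ u ∈ B.orthogonal F, B u v ≠ 0 := by
  contrapose! hv
  rw [← LinearMap.BilinForm.orthogonal_orthogonal hnd hB F]
  exact hv

theorem card_field_mul_card_ker [Fintype K] {f : V →ₗ[K] K} (hf : f ≠ 0) :
    Fintype.card K * Nat.card (LinearMap.ker f) = Nat.card V := by
  rw [(LinearMap.ker f).card_eq_card_quotient_mul_card, ← Nat.card_eq_fintype_card,
    Nat.card_congr (f.quotKerEquivOfSurjective (f.surjective hf)).toEquiv, mul_comm]

theorem exists_card_mul_card_undetected_sup_le [Fintype K] [Finite V] (hB : B.IsRefl)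
    (hnd : B.Nondegenerate) (S : Finset V) (F : Submodule K V) :
    ∃ u ∈ B.orthogonal F,
      Fintype.card K * #(undetected B S (F ⊔ K ∙ u)) ≤ #(undetected B S F) := by
  classical
  have : Fintype V := Fintype.ofFinite V
  set P := B.orthogonal F
  set T := undetected B S F
  have hfraction : ∀ v ∈ T, Fintype.card K * #{u : P | B u v = 0} = Fintype.card P := by
    intro v hv
    obtain ⟨u, hu, huv⟩ := exists_mem_orthogonal_apply_ne_zero hB hnd (mem_undetected.1 hv).2.2
    have hne : (B.flip v).domRestrict P ≠ 0 := fun h => huv (LinearMap.congr_fun h ⟨u, hu⟩)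
    rw [← Fintype.card_subtype, ← Nat.card_eq_fintype_card (α := {u : P // _}),
      ← Nat.card_eq_fintype_card (α := P)]
    exact card_field_mul_card_ker hne
  have hsum : ∑ u : P, Fintype.card K * #(undetected B S (F ⊔ K ∙ (u : V))) ≤ ∑ _u : P, #T := by
    calc ∑ u : P, Fintype.card K * #(undetected B S (F ⊔ K ∙ (u : V)))
        ≤ ∑ u : P, Fintype.card K * #{v ∈ T | B u v = 0} := by
          gcongr
          exact undetected_sup_span_singleton_subset
      _ = ∑ v ∈ T, Fintype.card K * #{u : P | B u v = 0} := by
          rw [← mul_sum, ← mul_sum]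
          congr 1
          exact sum_card_bipartiteAbove_eq_sum_card_bipartiteBelow _
      _ = ∑ _u : P, #T := by
          rw [sum_congr rfl hfraction, sum_const, sum_const, card_univ, smul_eq_mul, smul_eq_mul,
            mul_comm]
  obtain ⟨u, -, hu⟩ := exists_le_of_sum_le univ_nonempty hsum
  exact ⟨u, u.2, hu⟩

theorem exists_isotropic_pow_mul_card_undetected_le [Fintype K] [Finite V] (hB : B.IsAlt)
    (hnd : B.Nondegenerate) (S : Finset V) (r : ℕ) :
    ∃ F : Submodule K V, F ≤ B.orthogonal F ∧ finrank K F ≤ r ∧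
      Fintype.card K ^ r * #(undetected B S F) ≤ #S := by
  induction r with
  | zero =>
    have hsub : undetected B S ⊥ ⊆ S := fun v hv => (mem_undetected.1 hv).1
    exact ⟨⊥, bot_le, by simp, by simpa using card_le_card hsub⟩
  | succ r ih =>
    obtain ⟨F, hF, hdim, hcard⟩ := ih
    obtain ⟨u, hu, hle⟩ := exists_card_mul_card_undetected_sup_le hB.isRefl hnd S F
    refine ⟨F ⊔ K ∙ u, sup_span_singleton_le_orthogonal hB hF hu, ?_, ?_⟩
    · have hsup := finrank_add_le_finrank_add_finrank F (K ∙ u)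
      have hspan : finrank K (K ∙ u) ≤ 1 := by
        simpa using finrank_span_le_card (R := K) ({u} : Set V)
      omega
    · rw [pow_succ, mul_assoc]
      exact (Nat.mul_le_mul_left _ hle).trans hcard

theorem exists_isotropic_of_card_lt [Fintype K] [Finite V] (hB : B.IsAlt) (hnd : B.Nondegenerate)
    {r : ℕ} (hS : #S < Fintype.card K ^ r) :
    ∃ F : Submodule K V, F ≤ B.orthogonal F ∧ finrank K F ≤ r ∧
      ∀ v ∈ S, v ∈ B.orthogonal F → v ∈ F := by
  obtain ⟨F, hF, hdim, hcard⟩ := exists_isotropic_pow_mul_card_undetected_le hB hnd S r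
  refine ⟨F, hF, hdim, fun v hv hort => ?_⟩
  by_contra hvF
  have hpos : 0 < #(undetected B S F) := card_pos.2 ⟨v, mem_undetected.2 ⟨hv, hort, hvF⟩⟩
  exact (hcard.trans_lt hS).not_ge (Nat.le_mul_of_pos_right _ hpos)

end Isotropic

section TraceHermitian

variable {K L ι : Type*} [Field K] [Fintype K] [Field L] [Algebra K L] [Fintype ι]

variable (K L ι) in
/-- The trace-Hermitian form `ω(x, y) = ∑ⱼ Tr(xⱼ ȳⱼ)` on `ι → L`, where `ȳ = y ^ #K` is the
conjugation of the quadratic extension `L / K`. -/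
noncomputable def traceHermitianForm : LinearMap.BilinForm K (ι → L) :=
  ∑ j, (Algebra.traceForm K L).compl₁₂ (LinearMap.proj j)
    ((FiniteField.frobeniusAlgHom K L).toLinearMap ∘ₗ LinearMap.proj j)

theorem traceHermitianForm_apply (x y : ι → L) :
    traceHermitianForm K L ι x y = ∑ j, Algebra.trace K L (x j * y j ^ Fintype.card K) := by
  simp [traceHermitianForm, LinearMap.sum_apply, Algebra.traceForm_apply]

variable [Finite L]

theorem algebraMap_trace_eq_add_pow_card (hKL : finrank K L = 2) (x : L) :
    algebraMap K L (Algebra.trace K L x) = x + x ^ Fintype.card K := by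
  rw [FiniteField.algebraMap_trace_eq_sum_pow, hKL, Nat.card_eq_fintype_card]
  simp [sum_range_succ]

theorem pow_card_pow_card (hKL : finrank K L = 2) (x : L) :
    (x ^ Fintype.card K) ^ Fintype.card K = x := by
  have := Fintype.ofFinite L
  rw [← pow_mul, ← sq, ← hKL, ← Module.card_eq_pow_finrank, FiniteField.pow_card]

theorem trace_mul_pow_card_comm (hKL : finrank K L = 2) (x y : L) :
    Algebra.trace K L (x * y ^ Fintype.card K) = Algebra.trace K L (y * x ^ Fintype.card K) := by
  apply (algebraMap K L).injective
  rw [algebraMap_trace_eq_add_pow_card hKL, algebraMap_trace_eq_add_pow_card hKL, mul_pow, mul_pow,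
    pow_card_pow_card hKL, pow_card_pow_card hKL]
  ring

theorem trace_mul_pow_card_self [CharP K 2] (hKL : finrank K L = 2) (x : L) :
    Algebra.trace K L (x * x ^ Fintype.card K) = 0 := by
  have : CharP L 2 := charP_of_injective_algebraMap (algebraMap K L).injective 2
  apply (algebraMap K L).injective
  rw [algebraMap_trace_eq_add_pow_card hKL, mul_pow, pow_card_pow_card hKL, map_zero,
    mul_comm (x ^ _), CharTwo.add_self_eq_zero]

theorem traceHermitianForm_eq_zero_iff (hKL : finrank K L = 2) (x y : ι → L) :
    traceHermitianForm K L ι x y = 0 ↔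
      ∑ j, (x j * y j ^ Fintype.card K + (x j * y j ^ Fintype.card K) ^ Fintype.card K) = 0 := by
  rw [← FaithfulSMul.algebraMap_eq_zero_iff K L, traceHermitianForm_apply, map_sum]
  simp_rw [algebraMap_trace_eq_add_pow_card hKL]

theorem traceHermitianForm_comm (hKL : finrank K L = 2) (x y : ι → L) :
    traceHermitianForm K L ι x y = traceHermitianForm K L ι y x := by
  simp_rw [traceHermitianForm_apply, trace_mul_pow_card_comm hKL]

theorem traceHermitianForm_isAlt [CharP K 2] (hKL : finrank K L = 2) :
    (traceHermitianForm K L ι).IsAlt := fun x => by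
  simp [traceHermitianForm_apply, trace_mul_pow_card_self hKL]

theorem traceHermitianForm_nondegenerate (hKL : finrank K L = 2) :
    (traceHermitianForm K L ι).Nondegenerate := by
  classical
  have hleft : (traceHermitianForm K L ι).SeparatingLeft := by
    intro x hx
    funext j
    refine (traceForm_nondegenerate K L).1 (x j) fun a => ?_
    calc Algebra.trace K L (x j * a)
        = traceHermitianForm K L ι x (Pi.single j (a ^ Fintype.card K)) := by
          rw [traceHermitianForm_apply, sum_eq_single j (fun i _ hi => by simp [hi]) (by simp),
            Pi.single_eq_same, pow_card_pow_card hKL]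
      _ = 0 := hx _
  exact ⟨hleft, fun y hy => hleft y fun x => by rw [traceHermitianForm_comm hKL, hy x]⟩

end TraceHermitian

theorem qaryEntropy_eq_log_sub {q : ℕ} (hq : 1 < q) {δ : ℝ} (hδ0 : 0 < δ) (hδ1 : δ < 1) :
    qaryEntropy q δ = Real.log (1 + (q - 1) * (δ / ((q - 1) * (1 - δ)))) -
      δ * Real.log (δ / ((q - 1) * (1 - δ))) := by
  have hq1 : (0 : ℝ) < q - 1 := by rw [sub_pos]; exact_mod_cast hq
  have hδ' : 0 < 1 - δ := sub_pos.2 hδ1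
  have hinv : 1 + (q - 1) * (δ / ((q - 1) * (1 - δ))) = (1 - δ)⁻¹ := by field_simp; ring
  rw [hinv, Real.log_div hδ0.ne' (by positivity), Real.log_mul hq1.ne' hδ'.ne', qaryEntropy,
    Real.binEntropy]
  push_cast
  rw [Real.log_inv, Real.log_inv]
  ring

section HammingBall

variable {ι α : Type*} [Fintype ι] [DecidableEq ι] [Fintype α] [DecidableEq α] [Zero α]

theorem sum_pow_hammingNorm {R : Type*} [CommRing R] (x : R) :
    ∑ v : ι → α, x ^ hammingNorm v = (1 + (Fintype.card α - 1) * x) ^ Fintype.card ι := by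
  have hletter : ∑ a : α, (if a = 0 then 1 else x) = 1 + (Fintype.card α - 1) * x := by
    rw [sum_ite, filter_eq' univ (0 : α), if_pos (mem_univ _), filter_ne', sum_singleton, sum_const,
      card_erase_of_mem (mem_univ _), card_univ, nsmul_eq_mul, Nat.cast_pred Fintype.card_pos]
  have hword (v : ι → α) : x ^ hammingNorm v = ∏ i, if v i = 0 then 1 else x := by
    rw [prod_ite, prod_const_one, one_mul, prod_const, hammingNorm]
  rw [← hletter, ← card_univ (α := ι), ← prod_const, prod_univ_sum, Fintype.piFinset_univ]
  exact sum_congr rfl fun v _ => hword v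

/-- Markov's inequality for the weight enumerator. -/
theorem card_hammingNorm_lt_mul_rpow_le {x : ℝ} (hx0 : 0 < x) (hx1 : x ≤ 1) (t : ℝ) :
    #{v : ι → α | (hammingNorm v : ℝ) < t} * x ^ t ≤
      (1 + (Fintype.card α - 1) * x) ^ Fintype.card ι := by
  calc #{v : ι → α | (hammingNorm v : ℝ) < t} * x ^ t
      = ∑ v : ι → α with (hammingNorm v : ℝ) < t, x ^ t := by rw [sum_const, nsmul_eq_mul]
    _ ≤ ∑ v : ι → α with (hammingNorm v : ℝ) < t, x ^ hammingNorm v := by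
        refine sum_le_sum fun v hv => ?_
        rw [← Real.rpow_natCast]
        exact Real.rpow_le_rpow_of_exponent_ge hx0 hx1 (mem_filter.1 hv).2.le
    _ ≤ ∑ v : ι → α, x ^ hammingNorm v :=
        sum_le_sum_of_subset_of_nonneg (subset_univ _) fun _ _ _ => by positivity
    _ = (1 + (Fintype.card α - 1) * x) ^ Fintype.card ι := sum_pow_hammingNorm x

/-- The weight `x = δ / ((q - 1) (1 - δ))` minimises `(1 + (q - 1) x) / x ^ δ`. -/
theorem card_hammingNorm_lt_le_exp_qaryEntropy {δ : ℝ} (hδ0 : 0 ≤ δ)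
    (hδ1 : δ ≤ 1 - 1 / Fintype.card α) :
    (#{v : ι → α | (hammingNorm v : ℝ) < δ * Fintype.card ι} : ℝ) ≤
      Real.exp (Fintype.card ι * qaryEntropy (Fintype.card α) δ) := by
  obtain rfl | hδpos := hδ0.eq_or_lt
  · simp [not_lt.2 (Nat.cast_nonneg _)]
  set q := Fintype.card α
  have hq : 1 < q := by
    by_contra! h
    have hq1 : q = 1 := h.antisymm Fintype.card_pos
    norm_num [hq1] at hδ1
    linarith
  have hq0 : (0 : ℝ) < q := by positivity
  have hq1 : (0 : ℝ) < q - 1 := by rw [sub_pos]; exact_mod_cast hq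
  have hδlt : δ < 1 := hδ1.trans_lt (sub_lt_self _ (by positivity))
  have hden : 0 < (q - 1) * (1 - δ) := mul_pos hq1 (sub_pos.2 hδlt)
  rw [qaryEntropy_eq_log_sub hq hδpos hδlt]
  set x : ℝ := δ / ((q - 1) * (1 - δ))
  have hx0 : 0 < x := div_pos hδpos hden
  have hx1 : x ≤ 1 := by
    rw [div_le_one hden]
    have h := mul_le_mul_of_nonneg_left hδ1 hq0.le
    rw [mul_sub, mul_one_div_cancel hq0.ne'] at h
    linarith
  have hA : 0 < 1 + (q - 1) * x := by positivity
  calc (#{v : ι → α | (hammingNorm v : ℝ) < δ * Fintype.card ι} : ℝ)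
      ≤ (1 + (q - 1) * x) ^ Fintype.card ι / x ^ (δ * Fintype.card ι) :=
        (le_div_iff₀ (by positivity)).2 (card_hammingNorm_lt_mul_rpow_le hx0 hx1 _)
    _ = Real.exp (Fintype.card ι * (Real.log (1 + (q - 1) * x) - δ * Real.log x)) := by
        rw [mul_sub, Real.exp_sub, Real.exp_nat_mul, Real.exp_log hA, Real.rpow_def_of_pos hx0]
        ring_nf

end HammingBall

theorem mul_log_add_log_inv_le_sub {p a : ℝ} (hp : 0 ≤ p) (ha : 0 < a) :
    p * (Real.log a + Real.log p⁻¹) ≤ a - p := by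
  obtain rfl | hp := hp.eq_or_lt
  · simpa using ha.le
  · calc p * (Real.log a + Real.log p⁻¹) = p * Real.log (a * p⁻¹) := by
          rw [Real.log_mul ha.ne' (inv_pos.2 hp).ne']
      _ ≤ p * (a * p⁻¹ - 1) :=
          mul_le_mul_of_nonneg_left (Real.log_le_sub_one_of_pos (by positivity)) hp.le
      _ = a - p := by field_simp

/-- Gibbs' inequality: the entropy of the distribution giving mass `1 - δ` to one letter and
`δ / (q - 1)` to the others is at most its cross entropy with respect to the distribution
proportional to `(1, x, …, x)`. -/
theorem qaryEntropy_le {q : ℕ} (hq : 1 < q) {δ x : ℝ} (hδ0 : 0 ≤ δ) (hδ1 : δ ≤ 1) (hx : 0 < x) :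
    qaryEntropy q δ ≤ Real.log (1 + (q - 1) * x) - δ * Real.log x := by
  have hq1 : (0 : ℝ) < q - 1 := by rw [sub_pos]; exact_mod_cast hq
  set Z := 1 + (q - 1) * x
  have hZ : 0 < Z := by positivity
  have hzero := mul_log_add_log_inv_le_sub (sub_nonneg.2 hδ1) (inv_pos.2 hZ)
  have hrest := mul_log_add_log_inv_le_sub hδ0 (by positivity : 0 < (q - 1) * x / Z)
  have hmass : Z⁻¹ + (q - 1) * x / Z = 1 := by rw [inv_eq_one_div, ← add_div, div_self hZ.ne']
  rw [Real.log_inv] at hzero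
  rw [Real.log_div (by positivity) hZ.ne', Real.log_mul hq1.ne' hx.ne'] at hrest
  rw [qaryEntropy, Real.binEntropy]
  push_cast
  linarith

theorem four_le_two_pow {m : ℕ} (hm : 2 ≤ m) : (4 : ℝ) ≤ 2 ^ m := by
  calc (4 : ℝ) = 2 ^ 2 := by norm_num
    _ ≤ 2 ^ m := pow_le_pow_right₀ one_le_two hm

theorem qaryEntropy_four_div_log_two_le {m : ℕ} (hm : 2 ≤ m) {δ : ℝ} (hδ0 : 0 ≤ δ) (hδ1 : δ ≤ 1) :
    qaryEntropy 4 δ / Real.log 2 ≤ 2 / (2 ^ m - 2) + 3 * m * δ := by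
  have hm4 := four_le_two_pow hm
  have hlog2 : 1 / 2 < Real.log 2 := by linarith [Real.log_two_gt_d9]
  have hlogx : Real.log ((2 ^ m) ^ 3)⁻¹ = -(3 * m * Real.log 2) := by
    rw [Real.log_inv, Real.log_pow, Real.log_pow]
    push_cast
    ring
  have hlogZ : Real.log (1 + 3 * ((2 ^ m) ^ 3)⁻¹) ≤ 2 / (2 ^ m - 2) * Real.log 2 := by
    set Q : ℝ := 2 ^ m
    have hQ2 : 0 < Q - 2 := by linarith
    calc Real.log (1 + 3 * (Q ^ 3)⁻¹) ≤ 3 * (Q ^ 3)⁻¹ := by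
          linarith [Real.log_le_sub_one_of_pos (by positivity : 0 < 1 + 3 * (Q ^ 3)⁻¹)]
      _ ≤ 2 / (Q - 2) * (1 / 2) := by
          rw [← div_eq_mul_inv, div_mul_div_comm, div_le_div_iff₀ (by positivity) (by positivity)]
          nlinarith [mul_nonneg (sub_nonneg.2 hm4) (sub_nonneg.2 hm4)]
      _ ≤ 2 / (Q - 2) * Real.log 2 := by gcongr
  have hgibbs := qaryEntropy_le (q := 4) (by norm_num) hδ0 hδ1
    (by positivity : (0 : ℝ) < ((2 ^ m) ^ 3)⁻¹)
  rw [hlogx, show ((4 : ℕ) : ℝ) - 1 = 3 by norm_num] at hgibbs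
  rw [div_le_iff₀ (by linarith)]
  linarith

theorem breakpoint_mem_Icc {m : ℕ} (hm : 2 ≤ m) :
    (3 / 5) * 2 ^ m / ((2 ^ m - 2) * (2 ^ (m + 1) - 2)) ∈ Set.Icc (0 : ℝ) (3 / 4) := by
  have hm4 := four_le_two_pow hm
  rw [pow_succ]
  set Q : ℝ := 2 ^ m
  have hden : 0 < (Q - 2) * (Q * 2 - 2) := mul_pos (by linarith) (by linarith)
  refine ⟨by positivity, ?_⟩
  rw [div_le_iff₀ hden]
  nlinarith

section QuantumGilbertVarshamov

variable {K L : Type*} [Field K] [Fintype K] [CharP K 2] [Field L] [Algebra K L]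

theorem exists_isotropic_le_hammingNorm [Finite L] [DecidableEq L] {ι : Type*} [Fintype ι]
    (hKL : finrank K L = 2) {δ : ℝ} (hδ0 : 0 ≤ δ) (hδ1 : δ ≤ 1 - 1 / Fintype.card K ^ 2) {r : ℕ}
    (hr : Fintype.card ι * qaryEntropy (Fintype.card K ^ 2) δ < r * Real.log (Fintype.card K)) :
    ∃ F : Submodule K (ι → L), F ≤ (traceHermitianForm K L ι).orthogonal F ∧ finrank K F ≤ r ∧
      ∀ v ∈ (traceHermitianForm K L ι).orthogonal F, v ∉ F →
        δ * Fintype.card ι ≤ hammingNorm v := by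
  classical
  have := Fintype.ofFinite L
  have hL : Fintype.card L = Fintype.card K ^ 2 := by rw [Module.card_eq_pow_finrank (K := K), hKL]
  have hball : #{v : ι → L | (hammingNorm v : ℝ) < δ * Fintype.card ι} < Fintype.card K ^ r := by
    rify
    calc (#{v : ι → L | (hammingNorm v : ℝ) < δ * Fintype.card ι} : ℝ)
        ≤ Real.exp (Fintype.card ι * qaryEntropy (Fintype.card L) δ) :=
          card_hammingNorm_lt_le_exp_qaryEntropy hδ0 (by rw [hL]; exact_mod_cast hδ1)
      _ < Real.exp (r * Real.log (Fintype.card K)) := by rwa [hL, Real.exp_lt_exp]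
      _ = (Fintype.card K : ℝ) ^ r := by
          rw [Real.exp_nat_mul, Real.exp_log (by exact_mod_cast Fintype.card_pos)]
  obtain ⟨F, hF, hdim, hmem⟩ := exists_isotropic_of_card_lt (traceHermitianForm_isAlt hKL)
    (traceHermitianForm_nondegenerate hKL) hball
  refine ⟨F, hF, hdim, fun v hv hvF => ?_⟩
  by_contra! h
  exact hvF (hmem v (by simpa using h) hv)

/-- The Gilbert–Varshamov bound for stabilizer codes with alphabet `𝔽_q`, `q = #K` even. -/
theorem asymptotically_good_quantum_codes_general (hKL : finrank K L = 2) {δ R : ℝ} (hδ0 : 0 ≤ δ)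
    (hδ1 : δ ≤ 1 - 1 / Fintype.card K ^ 2)
    (hR : R ≤ 1 - qaryEntropy (Fintype.card K ^ 2) δ / Real.log (Fintype.card K)) :
    ∀ ε : ℝ, 0 < ε → ∀ N : ℕ, ∃ n : ℕ, N ≤ n ∧
      ∃ F : Submodule K (Fin n → L),
        (∀ x ∈ F, ∀ y ∈ F,
          ∑ j, (x j * (y j) ^ Fintype.card K +
            (x j * (y j) ^ Fintype.card K) ^ Fintype.card K) = 0) ∧
        (R - ε) * n ≤ (n : ℝ) - (finrank K F : ℝ) ∧
        (∀ f : Fin n → L,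
          (∀ y ∈ F, ∑ j, (f j * (y j) ^ Fintype.card K +
            (f j * (y j) ^ Fintype.card K) ^ Fintype.card K) = 0) →
          f ∉ F → (δ - ε) * n ≤ ({j | f j ≠ 0}.ncard : ℝ)) := by
  classical
  intro ε hε N
  have : Module.Finite K L := finite_of_finrank_pos (hKL ▸ two_pos)
  have : Finite L := Module.finite_of_finite K
  simp_rw [← traceHermitianForm_eq_zero_iff hKL]
  obtain ⟨n, hNn, hεn⟩ : ∃ n : ℕ, N ≤ n ∧ 1 ≤ ε * n := by
    refine ⟨max N ⌈1 / ε⌉₊, le_max_left _ _, ?_⟩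
    rw [← div_le_iff₀' hε]
    exact (Nat.le_ceil _).trans (by exact_mod_cast le_max_right _ _)
  set H := qaryEntropy (Fintype.card K ^ 2) δ / Real.log (Fintype.card K)
  have hlog : 0 < Real.log (Fintype.card K) :=
    Real.log_pos (by exact_mod_cast Fintype.one_lt_card)
  have hH : 0 ≤ H := div_nonneg
    (Real.qaryEntropy_nonneg hδ0 (hδ1.trans (sub_le_self _ (by positivity)))) hlog.le
  obtain ⟨F, hF, hdim, hdist⟩ := exists_isotropic_le_hammingNorm (ι := Fin n)
    (r := ⌊n * H⌋₊ + 1) hKL hδ0 hδ1 (by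
      rw [← div_lt_iff₀ hlog, Fintype.card_fin, mul_div_assoc]
      exact_mod_cast Nat.lt_floor_add_one (n * H))
  refine ⟨n, hNn, F, fun x hx y hy => hF hy x hx, ?_, fun f hf hfF => ?_⟩
  · have hfloor : (⌊n * H⌋₊ : ℝ) ≤ n * H := Nat.floor_le (by positivity)
    have hdim' : (finrank K F : ℝ) ≤ ⌊n * H⌋₊ + 1 := by exact_mod_cast hdim
    have hRn : n * R ≤ n * (1 - H) := by gcongr
    linarith
  · have hort : f ∈ (traceHermitianForm K L (Fin n)).orthogonal F := fun y hy => by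
      rw [traceHermitianForm_comm hKL, hf y hy]
    have hncard : {j | f j ≠ 0}.ncard = hammingNorm f := by
      rw [hammingNorm, ← Set.ncard_coe_finset, coe_filter_univ]
    have hweight := hdist f hort hfF
    rw [Fintype.card_fin] at hweight
    rw [hncard]
    linarith

end QuantumGilbertVarshamov

/-- Theorem 1 of the paper (main theorem), in symplectic-code form: for
`m ≥ 3` and `δ ∈ [δ_m, δ_{m−1}]` (with `δ₂ = 1/18` and
`δ_m = (3/5)·2^m/((2^m−2)(2^(m+1)−2))`), setting
`R(δ) = 1 − 2/(2^m−2) − (10/3)·m·δ`, there exist small symplectic codes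
`F ⊆ 𝔽₄ⁿ` of arbitrarily large length `n` with `n − dim F ≥ (R(δ) − ε)n`
and such that every `f ∈ F^ω ∖ F` has Hamming weight `≥ (δ − ε)n`.
Here `ω(x,y) = Σⱼ Tr(xⱼ ȳⱼ)` with `ȳ = y²` and `Tr z = z + z²`. -/
theorem asymptotically_good_quantum_codes
    (m : ℕ) (hm : 3 ≤ m) (δ : ℝ)
    (δlo δhi : ℝ)
    (hδlo : δlo = (3 / 5) * 2 ^ m / ((2 ^ m - 2) * (2 ^ (m + 1) - 2)))
    (hδhi : δhi = if m = 3 then 1 / 18 else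
      (3 / 5) * 2 ^ (m - 1) / ((2 ^ (m - 1) - 2) * (2 ^ m - 2)))
    (hδ : δlo ≤ δ ∧ δ ≤ δhi)
    (R : ℝ) (hR : R = 1 - 2 / (2 ^ m - 2) - (10 / 3) * m * δ) :
    ∀ ε : ℝ, 0 < ε → ∀ N : ℕ, ∃ n : ℕ, N ≤ n ∧
      ∃ F : Submodule (ZMod 2) (Fin n → GaloisField 2 2),
        (∀ x ∈ F, ∀ y ∈ F,
          ∑ j, (x j * (y j) ^ 2 + (x j * (y j) ^ 2) ^ 2) = 0) ∧
        (R - ε) * n ≤ (n : ℝ) - (Module.finrank (ZMod 2) F : ℝ) ∧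
        (∀ f : Fin n → GaloisField 2 2,
          (∀ y ∈ F, ∑ j, (f j * (y j) ^ 2 + (f j * (y j) ^ 2) ^ 2) = 0) →
          f ∉ F → (δ - ε) * n ≤ ({j | f j ≠ 0}.ncard : ℝ)) := by
  have hδ0 : 0 ≤ δ := (hδlo ▸ (breakpoint_mem_Icc (by omega)).1).trans hδ.1
  have hδ1 : δ ≤ 3 / 4 := by
    refine hδ.2.trans ?_
    rw [hδhi]
    split_ifs with h3
    · norm_num
    · obtain ⟨k, rfl⟩ : ∃ k, m = k + 1 := ⟨m - 1, by omega⟩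
      exact (breakpoint_mem_Icc (by omega)).2
  have hR' : R ≤ 1 - qaryEntropy 4 δ / Real.log 2 := by
    have hmδ : 0 ≤ m * δ := by positivity
    linarith [qaryEntropy_four_div_log_two_le (by omega : 2 ≤ m) hδ0 (by linarith : δ ≤ 1)]
  simpa only [ZMod.card] using asymptotically_good_quantum_codes_general (K := ZMod 2)
    (GaloisField.finrank 2 two_ne_zero) hδ0 (by rw [ZMod.card]; linarith) (by simpa using hR')
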